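/- arXiv:1806.00413 — 8 statements merged into one kernel-verified Lean document; each statement's English description precedes it below -/
import Mathlib

section
/- Let f : ℝⁿ → ℝ be twice continuously differentiable, S ⊆ ℝⁿ a set on which H_f(x)[y−x] > 0 for all x ≠ y in S, and A : ℝⁿ → ℝⁿ an invertible linear map. Let g := f ∘ A, so that H_g(u)[d] = H_f(Au)[Ad]. Then the stability constant is affine invariant: sup over pairs u ≠ v with Au, Av ∈ S of H_g(v)[v−u] / H_g(u)[v−u] equals sup over pairs x ≠ y in S of H_f(y)[y−x] / H_f(x)[y−x]. (Lemma 1.) -/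
open scoped RealInnerProductSpace

/-- The Hessian quadratic form `H_f(x)[d]`: the second derivative at `t = 0`
of `t ↦ f (x + t • d)` (equivalently `dᵀ ∇²f(x) d`). -/
noncomputable def hessQF {n : ℕ} (f : EuclideanSpace ℝ (Fin n) → ℝ)
    (x d : EuclideanSpace ℝ (Fin n)) : ℝ :=
  iteratedDeriv 2 (fun t : ℝ => f (x + t • d)) 0

/-- **Affine invariance of the stability constant** (Lemma 1). -/
theorem stability_affine_invariant {n : ℕ} (f : EuclideanSpace ℝ (Fin n) → ℝ)
    (hf : ContDiff ℝ 2 f) (S : Set (EuclideanSpace ℝ (Fin n)))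
    (hpos : ∀ x ∈ S, ∀ y ∈ S, x ≠ y → 0 < hessQF f x (y - x))
    (A : EuclideanSpace ℝ (Fin n) ≃ₗ[ℝ] EuclideanSpace ℝ (Fin n)) :
    sSup {c : ℝ | ∃ u v : EuclideanSpace ℝ (Fin n), A u ∈ S ∧ A v ∈ S ∧ u ≠ v ∧
        c = hessQF (fun w => f (A w)) v (v - u) / hessQF (fun w => f (A w)) u (v - u)} =
      sSup {c : ℝ | ∃ x ∈ S, ∃ y ∈ S, x ≠ y ∧
        c = hessQF f y (y - x) / hessQF f x (y - x)} := by
  have key : ∀ u d, hessQF (fun w => f (A w)) u d = hessQF f (A u) (A d) := fun u d => by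
    simp only [hessQF, map_add, map_smul]
  -- The two sets of quotients coincide, through the substitution `x = A u`, `y = A v`.
  congr 1
  ext c
  simp only [Set.mem_setOf_eq, key, map_sub]
  constructor
  · rintro ⟨u, v, hu, hv, huv, rfl⟩
    exact ⟨A u, hu, A v, hv, A.injective.ne huv, rfl⟩
  · rintro ⟨x, hx, y, hy, hxy, rfl⟩
    exact ⟨A.symm x, A.symm y, by simpa using hx, by simpa using hy, A.symm.injective.ne hxy,
      by simp only [LinearEquiv.apply_symm_apply]⟩
end

section
/- Let f : ℝⁿ → ℝ be twice continuously differentiable and S ⊆ ℝⁿ a set of Euclidean diameter at most D. Suppose f is μ-strongly convex on S (H_f(u)[d] ≥ μ‖d‖² for all u ∈ S, d ∈ ℝⁿ, with μ > 0) and has an M-Lipschitz Hessian on S (|H_f(v)[d] − H_f(u)[d]| ≤ M‖v−u‖·‖d‖² for all u, v ∈ S, d ∈ ℝⁿ). Then f has a (1 + MD/μ)-stable Hessian on S: for all u, v ∈ S with u ≠ v, H_f(u)[v−u] > 0 and H_f(v)[v−u] ≤ (1 + MD/μ)·H_f(u)[v−u]. (Theorem 1(ii).) -/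
/-!
With `d = v - u`, the Lipschitz bound and `‖d‖ ≤ D` give `H_f(v)[d] ≤ H_f(u)[d] + M D ‖d‖²`, and
strong convexity at `u` absorbs the error term: `‖d‖² ≤ H_f(u)[d] / μ`.
-/

open scoped RealInnerProductSpace

/-- **Theorem 1(ii)**: `M`-Lipschitz Hessian and `μ`-strong convexity on a set of
diameter at most `D` imply a `(1 + M·D/μ)`-stable Hessian. -/
theorem stable_of_lipschitz_hessian_strongly_convex {n : ℕ}
    (f : EuclideanSpace ℝ (Fin n) → ℝ) (hf : ContDiff ℝ 2 f)
    (S : Set (EuclideanSpace ℝ (Fin n))) (D μ M : ℝ) (hμ : 0 < μ)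
    (hD : ∀ u ∈ S, ∀ v ∈ S, ‖u - v‖ ≤ D)
    (hsc : ∀ u ∈ S, ∀ d : EuclideanSpace ℝ (Fin n), μ * ‖d‖ ^ 2 ≤ hessQF f u d)
    (hlip : ∀ u ∈ S, ∀ v ∈ S, ∀ d : EuclideanSpace ℝ (Fin n),
      |hessQF f v d - hessQF f u d| ≤ M * ‖v - u‖ * ‖d‖ ^ 2) :
    ∀ u ∈ S, ∀ v ∈ S, u ≠ v →
      0 < hessQF f u (v - u) ∧
      hessQF f v (v - u) ≤ (1 + M * D / μ) * hessQF f u (v - u) := by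
  intro u hu v hv huv
  have hr : 0 < ‖v - u‖ := norm_pos_iff.mpr (sub_ne_zero.mpr huv.symm)
  have h1 := hsc u hu (v - u)
  have h2 := hlip u hu v hv (v - u)
  have h3 := hD v hv u hu
  have hr2 : 0 < ‖v - u‖ ^ 2 := by positivity
  -- The Lipschitz bound is nonnegative and `v ≠ u`, which forces `M ≥ 0`.
  have hM : 0 ≤ M :=
    nonneg_of_mul_nonneg_left (nonneg_of_mul_nonneg_left ((abs_nonneg _).trans h2) hr2) hr
  refine ⟨(mul_pos hμ hr2).trans_le h1, ?_⟩
  have hMD : 0 ≤ M * D / μ := div_nonneg (mul_nonneg hM (hr.le.trans h3)) hμ.le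
  calc hessQF f v (v - u)
      ≤ hessQF f u (v - u) + M * ‖v - u‖ * ‖v - u‖ ^ 2 := by
        linarith [le_abs_self (hessQF f v (v - u) - hessQF f u (v - u))]
    _ ≤ hessQF f u (v - u) + M * D * ‖v - u‖ ^ 2 := by gcongr
    _ = hessQF f u (v - u) + M * D / μ * (μ * ‖v - u‖ ^ 2) := by field_simp
    _ ≤ hessQF f u (v - u) + M * D / μ * hessQF f u (v - u) := by gcongr
    _ = (1 + M * D / μ) * hessQF f u (v - u) := by ring
end

section
/- Let f : ℝⁿ → ℝ be twice continuously differentiable, S ⊆ ℝⁿ convex with Euclidean diameter at most D, and k ≥ 0, L > 0. Suppose (a) for all u ∈ S and d ≠ 0, 0 < H_f(u)[d] ≤ L‖d‖², and (b) f is k-self-concordant in the directional sense: for each u, v ∈ S with d := v − u, the map φ(t) := H_f(u + t·d)[d] is differentiable on [0,1] with |φ'(t)| ≤ 2k·φ(t)^{3/2}. Then for all u, v ∈ S with u ≠ v, H_f(v)[v−u] ≤ (1 + k·D·√L)²·H_f(u)[v−u], i.e. f has a (1 + kD√L)²-stable Hessian on S. (Theorem 1(iii), with the constant established in the paper's proof.)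 -/
/-!
Along the segment from `u` to `v`, with `d = v - u` and `φ(t) = H_f(u + t d)[d]`,
self-concordance says exactly that `φ ^ (-1/2)` is `k`-Lipschitz,
since its derivative is `-φ' φ ^ (-3/2) / 2`. Hence `1/√φ(0) - 1/√φ(1) ≤ k`, that is
`√φ(1) ≤ √φ(0) + k √φ(0) √φ(1)`. Smoothness gives `√φ(1) ≤ √L ‖v - u‖ ≤ D √L`, so
`√φ(1) ≤ (1 + k D √L) √φ(0)`; squaring finishes.
-/

open scoped RealInnerProductSpace

/-- One-dimensional self-concordance: the `k`-Lipschitz bound on `φ ^ (-1/2)`, with the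
denominators cleared. -/
lemma sqrt_sub_sqrt_le_of_self_concordant {φ φ' : ℝ → ℝ} {k : ℝ}
    (hpos : ∀ t ∈ Set.Icc (0 : ℝ) 1, 0 < φ t)
    (hderiv : ∀ t ∈ Set.Icc (0 : ℝ) 1, HasDerivWithinAt φ (φ' t) (Set.Icc (0 : ℝ) 1) t)
    (hbound : ∀ t ∈ Set.Icc (0 : ℝ) 1, |φ' t| ≤ 2 * k * φ t ^ ((3 : ℝ) / 2)) :
    √(φ 1) - √(φ 0) ≤ k * √(φ 0) * √(φ 1) := by
  have key := norm_image_sub_le_of_norm_deriv_le_segment_01' (C := k)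
    (f := fun t => φ t ^ (-(1 / 2) : ℝ))
    (fun t ht => (hderiv t ht).rpow_const (p := -(1 / 2)) (Or.inl (hpos t ht).ne'))
    (by
      intro t ht
      have ht' := Set.Ico_subset_Icc_self ht
      have h0 := hpos t ht'
      have hcancel : φ t ^ ((3 : ℝ) / 2) * φ t ^ (-(1 / 2) - 1 : ℝ) = 1 := by
        rw [← Real.rpow_add h0]
        norm_num
      have hr : 0 < φ t ^ (-(1 / 2) - 1 : ℝ) := Real.rpow_pos_of_pos h0 _
      rw [Real.norm_eq_abs, abs_mul, abs_mul, abs_of_pos hr]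
      have habs : |(-(1 / 2) : ℝ)| = 1 / 2 := by norm_num
      rw [habs]
      calc |φ' t| * (1 / 2) * φ t ^ (-(1 / 2) - 1 : ℝ)
          ≤ 2 * k * φ t ^ ((3 : ℝ) / 2) * (1 / 2) * φ t ^ (-(1 / 2) - 1 : ℝ) := by
            gcongr
            exact hbound t ht'
        _ = k * (φ t ^ ((3 : ℝ) / 2) * φ t ^ (-(1 / 2) - 1 : ℝ)) := by ring
        _ = k := by rw [hcancel, mul_one])
  have h0 := hpos 0 (by simp)
  have h1 := hpos 1 (by simp)
  have hs0 := Real.sqrt_pos.2 h0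
  have hs1 := Real.sqrt_pos.2 h1
  simp only [Real.rpow_neg h0.le, Real.rpow_neg h1.le, ← Real.sqrt_eq_rpow] at key
  rw [Real.norm_eq_abs] at key
  have hle : (√(φ 0))⁻¹ - (√(φ 1))⁻¹ ≤ k := by linarith [(abs_le.1 key).1]
  calc √(φ 1) - √(φ 0) = ((√(φ 0))⁻¹ - (√(φ 1))⁻¹) * (√(φ 0) * √(φ 1)) := by
        field_simp
    _ ≤ k * (√(φ 0) * √(φ 1)) := by gcongr
    _ = k * √(φ 0) * √(φ 1) := by ring

/-- **Theorem 1(iii)**: a `k`-self-concordant function (in the directional sense)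
with `L`-Lipschitz gradient on a convex set of diameter at most `D` has a
`(1 + k·D·√L)²`-stable Hessian. -/
theorem stable_of_self_concordant_smooth {n : ℕ}
    (f : EuclideanSpace ℝ (Fin n) → ℝ) (hf : ContDiff ℝ 2 f)
    (S : Set (EuclideanSpace ℝ (Fin n))) (hSconv : Convex ℝ S)
    (D k L : ℝ) (hk : 0 ≤ k) (hL : 0 < L)
    (hD : ∀ u ∈ S, ∀ v ∈ S, ‖u - v‖ ≤ D)
    (ha : ∀ u ∈ S, ∀ d : EuclideanSpace ℝ (Fin n), d ≠ 0 →
      0 < hessQF f u d ∧ hessQF f u d ≤ L * ‖d‖ ^ 2)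
    (hb : ∀ u ∈ S, ∀ v ∈ S, ∃ φ' : ℝ → ℝ, ∀ t ∈ Set.Icc (0 : ℝ) 1,
      HasDerivWithinAt (fun s : ℝ => hessQF f (u + s • (v - u)) (v - u)) (φ' t)
        (Set.Icc (0 : ℝ) 1) t ∧
      |φ' t| ≤ 2 * k * (hessQF f (u + t • (v - u)) (v - u)) ^ ((3 : ℝ) / 2)) :
    ∀ u ∈ S, ∀ v ∈ S, u ≠ v →
      hessQF f v (v - u) ≤ (1 + k * D * Real.sqrt L) ^ 2 * hessQF f u (v - u) := by
  intro u hu v hv huv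
  have hd : v - u ≠ 0 := sub_ne_zero.2 huv.symm
  obtain ⟨φ', hφ⟩ := hb u hu v hv
  have hmem : ∀ t ∈ Set.Icc (0 : ℝ) 1, u + t • (v - u) ∈ S :=
    fun t ht => hSconv.add_smul_sub_mem hu hv ht
  have key := sqrt_sub_sqrt_le_of_self_concordant
    (fun t ht => (ha _ (hmem t ht) _ hd).1) (fun t ht => (hφ t ht).1) (fun t ht => (hφ t ht).2)
  simp only [one_smul, zero_smul, add_zero, add_sub_cancel] at key
  obtain ⟨hv0, hvL⟩ := ha v hv _ hd
  have hu0 := (ha u hu _ hd).1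
  have hsqrt : √(hessQF f v (v - u)) ≤ D * √L := by
    calc √(hessQF f v (v - u)) ≤ √(L * ‖v - u‖ ^ 2) := Real.sqrt_le_sqrt hvL
      _ = ‖v - u‖ * √L := by
        rw [Real.sqrt_mul hL.le, Real.sqrt_sq (norm_nonneg _), mul_comm]
      _ ≤ D * √L := by
        gcongr
        exact hD v hv u hu
  have hmain : √(hessQF f v (v - u)) ≤ (1 + k * D * √L) * √(hessQF f u (v - u)) := by
    have := mul_le_mul_of_nonneg_left hsqrt (mul_nonneg hk (Real.sqrt_nonneg (hessQF f u (v - u))))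
    linarith
  have hsq := pow_le_pow_left₀ (Real.sqrt_nonneg _) hmain 2
  rwa [mul_pow, Real.sq_sqrt hv0.le, Real.sq_sqrt hu0.le] at hsq
end

section
/- Let f : ℝⁿ → ℝ be twice continuously differentiable, S ⊆ ℝⁿ convex with Euclidean diameter at most D, and k ≥ 0. Suppose (a) H_f(u)[d] > 0 for all u ∈ S and d ≠ 0, and (b) f is k-quasi-self-concordant in the directional sense: for each u, v ∈ S with d := v − u, the map φ(t) := H_f(u + t·d)[d] is differentiable on [0,1] with |φ'(t)| ≤ k‖d‖·φ(t). Then for all u, v ∈ S with u ≠ v, H_f(v)[v−u] ≤ exp(kD)·H_f(u)[v−u], i.e. f has an exp(kD)-stable Hessian on S. (Theorem 1(iv).) -/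
/-!
Along the segment from `u` to `v`, put `φ s = H_f(u + s (v - u))[v - u]` and `K = k ‖v - u‖`.
Quasi-self-concordance gives `φ' ≤ K φ`, so `exp (-K s) φ s` is antitone on `[0, 1]` (Grönwall).
Comparing the endpoints yields `φ 1 ≤ exp K * φ 0`, and `K ≤ k D` together with `φ 0 > 0`
gives the bound.
-/

open scoped RealInnerProductSpace

/-- **Theorem 1(iv)**: a `k`-quasi-self-concordant function (in the directional
sense) on a convex set of diameter at most `D` has an `exp(k·D)`-stable Hessian. -/
theorem stable_of_quasi_self_concordant {n : ℕ}
    (f : EuclideanSpace ℝ (Fin n) → ℝ) (hf : ContDiff ℝ 2 f)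
    (S : Set (EuclideanSpace ℝ (Fin n))) (hSconv : Convex ℝ S)
    (D k : ℝ) (hk : 0 ≤ k)
    (hD : ∀ u ∈ S, ∀ v ∈ S, ‖u - v‖ ≤ D)
    (ha : ∀ u ∈ S, ∀ d : EuclideanSpace ℝ (Fin n), d ≠ 0 → 0 < hessQF f u d)
    (hb : ∀ u ∈ S, ∀ v ∈ S, ∃ φ' : ℝ → ℝ, ∀ t ∈ Set.Icc (0 : ℝ) 1,
      HasDerivWithinAt (fun s : ℝ => hessQF f (u + s • (v - u)) (v - u)) (φ' t)
        (Set.Icc (0 : ℝ) 1) t ∧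
      |φ' t| ≤ k * ‖v - u‖ * hessQF f (u + t • (v - u)) (v - u)) :
    ∀ u ∈ S, ∀ v ∈ S, u ≠ v →
      hessQF f v (v - u) ≤ Real.exp (k * D) * hessQF f u (v - u) := by
  intro u hu v hv huv
  obtain ⟨φ', hφ⟩ := hb u hu v hv
  set K := k * ‖v - u‖ with hK
  set φ : ℝ → ℝ := fun s => hessQF f (u + s • (v - u)) (v - u) with hφdef
  have hψ : ∀ t ∈ Set.Icc (0 : ℝ) 1, HasDerivWithinAt (fun s => Real.exp (-(K * s)) * φ s)
      (Real.exp (-(K * t)) * (φ' t - K * φ t)) (Set.Icc (0 : ℝ) 1) t := by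
    intro t ht
    have hexp : HasDerivAt (fun s : ℝ => Real.exp (-(K * s)))
        (Real.exp (-(K * t)) * (-(K * 1))) t :=
      (((hasDerivAt_id t).const_mul K).neg).exp
    refine (hexp.hasDerivWithinAt.mul (hφ t ht).1).congr_deriv ?_
    ring
  have hanti : AntitoneOn (fun s => Real.exp (-(K * s)) * φ s) (Set.Icc (0 : ℝ) 1) := by
    refine antitoneOn_of_hasDerivWithinAt_nonpos (convex_Icc 0 1)
      (fun t ht => (hψ t ht).continuousWithinAt)
      (fun t ht => (hψ t (interior_subset ht)).mono interior_subset) (fun t ht => ?_)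
    have hbound := (le_abs_self _).trans (hφ t (interior_subset ht)).2
    exact mul_nonpos_of_nonneg_of_nonpos (Real.exp_pos _).le (sub_nonpos.2 hbound)
  have h01 := hanti (Set.left_mem_Icc.2 zero_le_one) (Set.right_mem_Icc.2 zero_le_one)
    zero_le_one
  simp only [hφdef, mul_one, mul_zero, neg_zero, Real.exp_zero, one_mul, one_smul, zero_smul,
    add_zero, add_sub_cancel] at h01
  have hpos : 0 < hessQF f u (v - u) := ha u hu _ (sub_ne_zero.2 huv.symm)
  calc hessQF f v (v - u)
      = Real.exp K * (Real.exp (-K) * hessQF f v (v - u)) := by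
        rw [← mul_assoc, ← Real.exp_add, add_neg_cancel, Real.exp_zero, one_mul]
    _ ≤ Real.exp K * hessQF f u (v - u) := by gcongr
    _ ≤ Real.exp (k * D) * hessQF f u (v - u) := by
        have hKD : K ≤ k * D := mul_le_mul_of_nonneg_left (hD v hv u hu) hk
        gcongr
end

section
/- Let f : ℝⁿ → ℝ be twice continuously differentiable, c ≥ 1, and let x, y ∈ ℝⁿ with x ≠ y be such that for every point z = (1−γ)x + γy with γ ∈ (0,1] one has H_f(z)[z−x] ≤ c·H_f(x)[z−x]. Then f(y) ≤ f(x) + ⟨∇f(x), y − x⟩ + (c/2)·H_f(x)[y−x]. (Lemma 2, upper bound.) -/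
/-!
Put `d = y - x` and `g t = f (x + t • d)`. Taylor's theorem with Lagrange remainder gives
`f y = g 0 + g' 0 + g'' γ / 2` for some `γ ∈ (0, 1)`, where `g' 0 = ⟪∇f x, d⟫`. The chain rule
(`hessQF_segment`) turns the stability hypothesis at `γ` into `γ² g'' γ ≤ c γ² g'' 0`, and dividing
by `γ² > 0` bounds the remainder.
-/

open scoped RealInnerProductSpace

/-- Hessian forms based on the line through `x` with direction `d`, evaluated at multiples of `d`,
are, up to the factor `r ^ 2`, second derivatives of the restriction of `f` to that line. -/
lemma hessQF_segment {n : ℕ} {f : EuclideanSpace ℝ (Fin n) → ℝ} (hf : ContDiff ℝ 2 f)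
    (x d : EuclideanSpace ℝ (Fin n)) (s r : ℝ) :
    hessQF f (x + s • d) (r • d) =
      r ^ 2 * iteratedDeriv 2 (fun t : ℝ => f (x + t • d)) s := by
  have hg : ContDiff ℝ 2 (fun t : ℝ => f (x + (s + t) • d)) := by fun_prop
  have hline : (fun t : ℝ => f (x + s • d + t • (r • d))) =
      fun t : ℝ => (fun t : ℝ => f (x + (s + t) • d)) (r * t) := by
    funext t
    congr 1
    module
  rw [hessQF, hline, iteratedDeriv_comp_const_mul hg r]
  have hshift := congrFun
    (iteratedDeriv_comp_const_add 2 (fun t : ℝ => f (x + t • d)) s) 0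
  simp only [add_zero] at hshift
  simp [hshift]

/-- **Lemma 2, upper bound**: if the Hessian along the segment from `x` to `y` is
`c`-stable relative to `x`, then
`f(y) ≤ f(x) + ⟨∇f(x), y − x⟩ + (c/2)·H_f(x)[y − x]`. -/
theorem upper_bound_of_stable {n : ℕ} (f : EuclideanSpace ℝ (Fin n) → ℝ)
    (hf : ContDiff ℝ 2 f) (c : ℝ) (hc : 1 ≤ c)
    (x y : EuclideanSpace ℝ (Fin n)) (hxy : x ≠ y)
    (hstab : ∀ γ ∈ Set.Ioc (0 : ℝ) 1,
      hessQF f (x + γ • (y - x)) (γ • (y - x)) ≤ c * hessQF f x (γ • (y - x))) :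
    f y ≤ f x + ⟪gradient f x, y - x⟫ + (c / 2) * hessQF f x (y - x) := by
  set d := y - x with hd
  set g : ℝ → ℝ := fun t => f (x + t • d) with hg
  have hgc : ContDiff ℝ 2 g := by fun_prop
  have hg' : HasDerivAt g ⟪gradient f x, d⟫ 0 := by
    have hfx : HasFDerivAt f (fderiv ℝ f x) (x + (0 : ℝ) • d) := by
      simpa using (hf.differentiable (by norm_num) x).hasFDerivAt
    have hl : HasDerivAt (fun t : ℝ => x + t • d) d 0 := by
      simpa using ((hasDerivAt_id (0 : ℝ)).smul_const d).const_add x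
    rw [inner_gradient_left]
    exact hfx.comp_hasDerivAt (0 : ℝ) hl
  obtain ⟨γ, hγ, hT⟩ := taylor_mean_remainder_lagrange_iteratedDeriv (f := g) (x := 1) (x₀ := 0)
    (n := 1) zero_ne_one (by exact_mod_cast hgc.contDiffOn)
  have hγ' : 0 < γ ∧ γ < 1 := by simpa using hγ
  have hdw : derivWithin g (Set.Icc 0 1) 0 = ⟪gradient f x, d⟫ :=
    hg'.hasDerivWithinAt.derivWithin (uniqueDiffOn_Icc zero_lt_one 0 (by simp))
  have hg0 : g 0 = f x := by simp [hg]
  have hg1 : g 1 = f y := by simp [hg, hd]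
  have h0 (r : ℝ) : hessQF f x (r • d) = r ^ 2 * iteratedDeriv 2 g 0 := by
    simpa using hessQF_segment hf x d 0 r
  have hH : hessQF f x d = iteratedDeriv 2 g 0 := rfl
  have hs := hstab γ ⟨hγ'.1, hγ'.2.le⟩
  rw [hessQF_segment hf, h0] at hs
  have hle : iteratedDeriv 2 g γ ≤ c * iteratedDeriv 2 g 0 := by
    refine le_of_mul_le_mul_left (a := γ ^ 2) ?_ (pow_pos hγ'.1 2)
    linarith
  simp [taylorWithinEval_succ, iteratedDerivWithin_one, hdw, hg0, hg1] at hT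
  rw [hH, inner_gradient_left]
  linarith
end

section
/- Let f : ℝⁿ → ℝ be twice continuously differentiable, c ≥ 1, and let x, y ∈ ℝⁿ with x ≠ y be such that for every point z = (1−γ)x + γy with γ ∈ (0,1] one has H_f(x)[z−x] ≤ c·H_f(z)[z−x]. Then f(y) ≥ f(x) + ⟨∇f(x), y − x⟩ + (1/(2c))·H_f(x)[y−x]. (Lemma 2, lower bound.) -/
/-!
Restrict `f` to the line through `x` and `y`: with `g t = f (x + t • (y - x))`, the chain rule
gives `H_f(x + a(y - x))[γ(y - x)] = γ² g''(a)` (`hessQF_line`), so the stability hypothesis,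
divided by `γ²`, reads `g''(0) ≤ c g''(γ)` for `γ ∈ (0, 1]`. Taylor's formula with Lagrange
remainder, `g 1 = g 0 + g' 0 + g''(ξ) / 2` with `ξ ∈ (0, 1)`, then yields the bound.
-/


open scoped RealInnerProductSpace

lemma hessQF_line {n : ℕ} {f : EuclideanSpace ℝ (Fin n) → ℝ} (hf : ContDiff ℝ 2 f)
    (x d : EuclideanSpace ℝ (Fin n)) (a γ : ℝ) :
    hessQF f (x + a • d) (γ • d) = γ ^ 2 * iteratedDeriv 2 (fun t : ℝ => f (x + t • d)) a := by
  have hga : ContDiff ℝ 2 (fun s : ℝ => f (x + (a + s) • d)) := by fun_prop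
  have hline : (fun t : ℝ => f (x + a • d + t • γ • d)) =
      fun t : ℝ => (fun s : ℝ => f (x + (a + s) • d)) (γ * t) := by
    funext t
    congr 1
    module
  have h1 := congrFun (iteratedDeriv_comp_const_mul (n := 2) hga γ) 0
  have h2 := congrFun (iteratedDeriv_comp_const_add 2 (fun t : ℝ => f (x + t • d)) a) 0
  simp only [mul_zero, add_zero] at h1 h2
  rw [hessQF, hline, h1, h2]

/-- **Lemma 2, lower bound**: if the Hessian at `x` is `c`-stable relative to
every point of the segment from `x` to `y`, then
`f(y) ≥ f(x) + ⟨∇f(x), y − x⟩ + (1/(2c))·H_f(x)[y − x]`. -/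
theorem lower_bound_of_stable {n : ℕ} (f : EuclideanSpace ℝ (Fin n) → ℝ)
    (hf : ContDiff ℝ 2 f) (c : ℝ) (hc : 1 ≤ c)
    (x y : EuclideanSpace ℝ (Fin n)) (hxy : x ≠ y)
    (hstab : ∀ γ ∈ Set.Ioc (0 : ℝ) 1,
      hessQF f x (γ • (y - x)) ≤ c * hessQF f (x + γ • (y - x)) (γ • (y - x))) :
    f y ≥ f x + ⟪gradient f x, y - x⟫ + (1 / (2 * c)) * hessQF f x (y - x) := by
  set d := y - x with hd
  have hg : ContDiff ℝ 2 (fun t : ℝ => f (x + t • d)) := by fun_prop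
  have hx : ∀ γ : ℝ, hessQF f x (γ • d) =
      γ ^ 2 * iteratedDeriv 2 (fun t : ℝ => f (x + t • d)) 0 := fun γ => by
    simpa using hessQF_line hf x d 0 γ
  have hderiv : HasDerivAt (fun t : ℝ => f (x + t • d)) ⟪gradient f x, d⟫ 0 := by
    have hgrad : HasFDerivAt f (InnerProductSpace.toDual ℝ _ (gradient f x))
        (x + (0 : ℝ) • d) := by
      simpa using ((hf.differentiable (by norm_num)) x).hasGradientAt.hasFDerivAt
    have hl : HasDerivAt (fun t : ℝ => x + t • d) d 0 := by
      simpa using ((hasDerivAt_id (0 : ℝ)).smul_const d).const_add x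
    have h := hgrad.comp_hasDerivAt (0 : ℝ) hl
    rw [InnerProductSpace.toDual_apply_apply] at h
    exact h
  obtain ⟨ξ, hξ, hT⟩ := taylor_mean_remainder_lagrange_iteratedDeriv (n := 1)
    (zero_ne_one (α := ℝ)) (f := fun t : ℝ => f (x + t • d)) (by exact_mod_cast hg.contDiffOn)
  have hξ' : ξ ∈ Set.Ioo (0 : ℝ) 1 := by simpa using hξ
  have hW : derivWithin (fun t : ℝ => f (x + t • d)) (Set.Icc 0 1) 0 = ⟪gradient f x, d⟫ :=
    hderiv.hasDerivWithinAt.derivWithin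
      (uniqueDiffOn_Icc (by norm_num) 0 (by simp))
  have hy : x + d = y := by simp [hd]
  simp [taylorWithinEval_succ, iteratedDerivWithin_one, hW, hy, -inner_gradient_left] at hT
  have hs := hstab ξ ⟨hξ'.1, hξ'.2.le⟩
  rw [hx, hessQF_line hf x d ξ ξ] at hs
  have h1 := hx 1
  rw [one_smul, one_pow, one_mul] at h1
  rw [h1]
  set A := iteratedDeriv 2 (fun t : ℝ => f (x + t • d)) 0
  set B := iteratedDeriv 2 (fun t : ℝ => f (x + t • d)) ξ
  have hAB : A ≤ c * B := by
    refine le_of_mul_le_mul_left (a := ξ ^ 2) ?_ (pow_pos hξ'.1 2)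
    linarith
  have hAB' : 1 / (2 * c) * A ≤ B / 2 := by
    have hc0 : 0 < c := by linarith
    rw [div_mul_eq_mul_div, div_le_iff₀ (by positivity)]
    linarith
  linarith
end

section
/- Let f : ℝⁿ → ℝ be convex and twice continuously differentiable, attaining its global minimum at x*. Let x₀ ∈ ℝⁿ, D₀ := {x : f(x) ≤ f(x₀)}, and suppose f has a c-stable Hessian on D₀ for some c ≥ 1. Then for any x ∈ D₀ and any Δ ∈ ℝⁿ with ∇²f(x)·Δ = ∇f(x), f(x*) ≥ f(x) − (c/2)·H_f(x)[Δ]; equivalently f(x*) ≥ f(x) − (c/2)·⟨Δ, ∇f(x)⟩. (Minimization of the global lower bound, key step in the proof of Theorem 2.) -/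
/-!
Write `B = ∇²f(x)` and `d = x* - x`. Stability applied to the pair `(x + t d, x)`, together with the
quadratic homogeneity of the Hessian form, bounds the second derivative of `t ↦ f (x + t d)` on
`(0, 1)` below by `B(d, d) / c`; the segment stays in the level set by convexity. Integrating twice
(`taylor_lower_bound`) gives `f(x*) ≥ f(x) + ⟨∇f(x), d⟩ + B(d, d) / (2c)`. As `∇f(x) = B Δ`, the
right-hand side equals `f(x) - (c/2) B(Δ, Δ) + B(d + cΔ, d + cΔ) / (2c)`, by symmetry of `B`, and the
last term is nonnegative because `B` is positive semidefinite (`snd_fderiv_nonneg`).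
-/

open scoped RealInnerProductSpace

section Line

variable {n : ℕ} {f : EuclideanSpace ℝ (Fin n) → ℝ}

lemma hasDerivAt_line (hf : ContDiff ℝ 2 f) (x d : EuclideanSpace ℝ (Fin n)) (t : ℝ) :
    HasDerivAt (fun t : ℝ => f (x + t • d)) (fderiv ℝ f (x + t • d) d) t := by
  have hl : HasDerivAt (fun t : ℝ => x + t • d) d t := by
    simpa using ((hasDerivAt_id t).smul_const d).const_add x
  exact ((hf.differentiable (by norm_num)) _).hasFDerivAt.comp_hasDerivAt t hl

lemma hasDerivAt_fderiv_line (hf : ContDiff ℝ 2 f) (x d : EuclideanSpace ℝ (Fin n)) (t : ℝ) :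
    HasDerivAt (fun t : ℝ => fderiv ℝ f (x + t • d) d)
      (fderiv ℝ (fderiv ℝ f) (x + t • d) d d) t := by
  have hl : HasDerivAt (fun t : ℝ => x + t • d) d t := by
    simpa using ((hasDerivAt_id t).smul_const d).const_add x
  have hd : Differentiable ℝ (fderiv ℝ f) :=
    (hf.fderiv_right (m := 1) (by norm_num)).differentiable (by norm_num)
  have h := (hd (x + t • d)).hasFDerivAt.comp_hasDerivAt t hl
  simpa using h.clm_apply (hasDerivAt_const t d)

lemma hessQF_eq (hf : ContDiff ℝ 2 f) (x d : EuclideanSpace ℝ (Fin n)) :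
    hessQF f x d = fderiv ℝ (fderiv ℝ f) x d d := by
  have h1 : deriv (fun t : ℝ => f (x + t • d)) = fun t => fderiv ℝ f (x + t • d) d :=
    funext fun t => (hasDerivAt_line hf x d t).deriv
  rw [hessQF, iteratedDeriv_succ, iteratedDeriv_one, h1, (hasDerivAt_fderiv_line hf x d 0).deriv]
  simp

lemma inner_fderiv_gradient (hf : ContDiff ℝ 2 f) (x u v : EuclideanSpace ℝ (Fin n)) :
    ⟪fderiv ℝ (gradient f) x u, v⟫ = fderiv ℝ (fderiv ℝ f) x u v := by
  have hd : DifferentiableAt ℝ (fderiv ℝ f) x :=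
    ((hf.fderiv_right (m := 1) (by norm_num)).differentiable (by norm_num)) x
  -- the Riesz isomorphism is conjugate-linear in Mathlib; over `ℝ` it is repackaged as a linear map
  let L : StrongDual ℝ (EuclideanSpace ℝ (Fin n)) →L[ℝ] EuclideanSpace ℝ (Fin n) :=
    { toFun := (InnerProductSpace.toDual ℝ (EuclideanSpace ℝ (Fin n))).symm
      map_add' := by simp
      map_smul' := by simp
      cont := (InnerProductSpace.toDual ℝ (EuclideanSpace ℝ (Fin n))).symm.continuous }
  have h : HasFDerivAt (gradient f) (L.comp (fderiv ℝ (fderiv ℝ f) x)) x :=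
    L.hasFDerivAt.comp x hd.hasFDerivAt
  rw [h.fderiv]
  simp [L]

lemma snd_fderiv_nonneg (hconv : ConvexOn ℝ Set.univ f) (hf : ContDiff ℝ 2 f)
    (x d : EuclideanSpace ℝ (Fin n)) : 0 ≤ fderiv ℝ (fderiv ℝ f) x d d := by
  have hg : ConvexOn ℝ Set.univ (fun t : ℝ => f (x + t • d)) := by
    have := hconv.comp_affineMap (AffineMap.lineMap x (x + d) : ℝ →ᵃ[ℝ] _)
    refine this.congr fun t _ => ?_
    simp [AffineMap.lineMap_apply, add_comm]
  have hm := hg.monotoneOn_deriv fun t _ => (hasDerivAt_line hf x d t).differentiableAt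
  rw [monotoneOn_univ, funext fun t => (hasDerivAt_line hf x d t).deriv] at hm
  simpa using (hasDerivAt_fderiv_line hf x d 0).nonneg_of_monotone hm

end Line

/-- Second-order Taylor lower bound on `[0, 1]` from a lower bound on the second derivative. -/
lemma taylor_lower_bound {g g' g'' : ℝ → ℝ} {m : ℝ} (h1 : ∀ t, HasDerivAt g (g' t) t)
    (h2 : ∀ t, HasDerivAt g' (g'' t) t) (hm : ∀ t ∈ Set.Ioo (0 : ℝ) 1, m ≤ g'' t) :
    g 0 + g' 0 + m / 2 ≤ g 1 := by
  have k2 : ∀ t, HasDerivAt (fun t => g' t - m * t) (g'' t - m) t := fun t => by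
    have h := (h2 t).fun_sub ((hasDerivAt_id' t).const_mul m)
    rwa [mul_one] at h
  have k1 : ∀ t, HasDerivAt (fun t => g t - g' 0 * t - m / 2 * t ^ 2) (g' t - g' 0 - m * t) t :=
    fun t => by
      refine (((h1 t).fun_sub ((hasDerivAt_id' t).const_mul (g' 0))).fun_sub
        ((hasDerivAt_pow 2 t).const_mul (m / 2))).congr_deriv ?_
      push_cast
      ring
  have m2 : MonotoneOn (fun t => g' t - m * t) (Set.Icc 0 1) := by
    refine monotoneOn_of_hasDerivWithinAt_nonneg (convex_Icc 0 1)
      (fun t _ => (k2 t).continuousAt.continuousWithinAt)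
      (fun t _ => (k2 t).hasDerivWithinAt) fun t ht => ?_
    rw [interior_Icc] at ht
    exact sub_nonneg.2 (hm t ht)
  have m1 : MonotoneOn (fun t => g t - g' 0 * t - m / 2 * t ^ 2) (Set.Icc 0 1) := by
    refine monotoneOn_of_hasDerivWithinAt_nonneg (convex_Icc 0 1)
      (fun t _ => (k1 t).continuousAt.continuousWithinAt)
      (fun t _ => (k1 t).hasDerivWithinAt) fun t ht => ?_
    rw [interior_Icc] at ht
    have := m2 (by simp) (Set.Ioo_subset_Icc_self ht) ht.1.le
    simp only [mul_zero, sub_zero] at this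
    linarith
  have := m1 (Set.left_mem_Icc.2 zero_le_one) (Set.right_mem_Icc.2 zero_le_one) zero_le_one
  norm_num at this
  linarith

/-- Minimization of the global lower bound (key step of Theorem 2): for any
`x` in the level set of `x₀` and Newton direction `Δ` with `∇²f(x)·Δ = ∇f(x)`,
`f(x*) ≥ f(x) − (c/2)·H_f(x)[Δ]`, equivalently `f(x*) ≥ f(x) − (c/2)·⟨Δ, ∇f(x)⟩`. -/
theorem lower_bound_minimization {n : ℕ} (f : EuclideanSpace ℝ (Fin n) → ℝ)
    (hconv : ConvexOn ℝ Set.univ f) (hf : ContDiff ℝ 2 f)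
    (xstar : EuclideanSpace ℝ (Fin n)) (hmin : ∀ y, f xstar ≤ f y)
    (x₀ : EuclideanSpace ℝ (Fin n)) (c : ℝ) (hc : 1 ≤ c)
    (hstab : ∀ u ∈ {z | f z ≤ f x₀}, ∀ v ∈ {z | f z ≤ f x₀}, u ≠ v →
      0 < hessQF f u (v - u) ∧ hessQF f v (v - u) ≤ c * hessQF f u (v - u))
    (x : EuclideanSpace ℝ (Fin n)) (hx : f x ≤ f x₀)
    (Δ : EuclideanSpace ℝ (Fin n))
    (hΔ : fderiv ℝ (gradient f) x Δ = gradient f x) :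
    f x - (c / 2) * hessQF f x Δ ≤ f xstar ∧
    f x - (c / 2) * ⟪Δ, gradient f x⟫ ≤ f xstar := by
  have hc0 : 0 < c := by linarith
  obtain ⟨d, rfl⟩ : ∃ d, xstar = x + d := ⟨xstar - x, by simp⟩
  have hgrad : ∀ v, fderiv ℝ f x v = fderiv ℝ (fderiv ℝ f) x Δ v := fun v => by
    rw [← inner_fderiv_gradient hf, hΔ, inner_gradient_left]
  have hlow : ∀ t ∈ Set.Ioo (0 : ℝ) 1, fderiv ℝ (fderiv ℝ f) x d d / c ≤
      fderiv ℝ (fderiv ℝ f) (x + t • d) d d := by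
    intro t ht
    by_cases hd : d = 0
    · simp [hd]
    have hu : f (x + t • d) ≤ f x₀ := by
      have h := hconv.2 (Set.mem_univ x) (Set.mem_univ (x + d)) (sub_nonneg.2 ht.2.le) ht.1.le
        (by ring)
      have he : (1 - t) • x + t • (x + d) = x + t • d := by module
      rw [he, smul_eq_mul, smul_eq_mul] at h
      nlinarith [hmin x, ht.1]
    have hs := (hstab (x + t • d) hu x hx (by simp [hd, ht.1.ne'])).2
    have he : x - (x + t • d) = (-t) • d := by module
    rw [hessQF_eq hf, hessQF_eq hf, he] at hs
    simp only [map_smul, smul_apply, smul_eq_mul] at hs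
    have ht2 : 0 < t * t := mul_pos ht.1 ht.1
    rw [div_le_iff₀ hc0]
    refine le_of_mul_le_mul_left ?_ ht2
    linarith
  have htay := taylor_lower_bound (hasDerivAt_line hf x d) (hasDerivAt_fderiv_line hf x d) hlow
  simp only [zero_smul, add_zero, one_smul, hgrad] at htay
  have hsymm : fderiv ℝ (fderiv ℝ f) x d Δ = fderiv ℝ (fderiv ℝ f) x Δ d :=
    (hf.contDiffAt.isSymmSndFDerivAt (by simp)) d Δ
  have hpsd := snd_fderiv_nonneg hconv hf x (d + c • Δ)
  simp only [map_add, map_smul, add_apply, smul_apply, smul_eq_mul, hsymm] at hpsd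
  have key : f x - (c / 2) * fderiv ℝ (fderiv ℝ f) x Δ Δ ≤ f (x + d) := by
    refine le_trans ?_ htay
    -- completing the square: the difference of the two sides is `B(d + cΔ, d + cΔ) / (2c)`
    have := div_nonneg hpsd (by linarith : 0 ≤ 2 * c)
    rw [← sub_nonneg]
    convert this using 1
    field_simp
    ring
  refine ⟨by rwa [hessQF_eq hf], ?_⟩
  rwa [real_inner_comm, inner_gradient_left, hgrad]
end

section
/- Let E be a real inner product space, S ⊆ E a convex set with 0 ∈ S, a ∈ E, q : E → ℝ a nonnegative quadratic form (q(x) = B(x,x) for a symmetric bilinear form B with B(x,x) ≥ 0 for all x), and ψ : E → ℝ convex with ψ(0) = 0. For σ > 0 define Q^σ(x) := ⟨a, x⟩ + (σ/2)·q(x) + ψ(x). Then for all α, β > 0 with α·β ≥ 1, inf over x ∈ S of Q^α(x) ≤ (1/(αβ)) · inf over x ∈ S of Q^{1/β}(x). (Lemma 9 / changing-sigma lemma.) -/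
/-!
Put `t = 1 / (α β) ∈ (0, 1]`. For `x ∈ S` the point `t • x` lies in `S`, and since `α t² = t / β`
and `ψ (t • x) ≤ t ψ x` (convexity and `ψ 0 = 0`), one gets `Q^α (t • x) ≤ t Q^{1/β} x`;
taking infima gives the claim. When `Q^α` is unbounded below on `S`, so is `Q^{1/β} ≤ Q^α`
(as `1 / β ≤ α`), and both real infima take the junk value `0`.
-/

open scoped RealInnerProductSpace

/-- **Lemma 9 (changing-sigma lemma)**: for `Q^σ(x) = ⟨a, x⟩ + (σ/2)·q(x) + ψ(x)`
with `q` a nonnegative quadratic form and `ψ` convex with `ψ(0) = 0`, and any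
`α, β > 0` with `α·β ≥ 1`,
`inf_{x ∈ S} Q^α(x) ≤ (1/(αβ)) · inf_{x ∈ S} Q^{1/β}(x)`. -/
theorem changing_sigma {E : Type*} [NormedAddCommGroup E] [InnerProductSpace ℝ E]
    (S : Set E) (hS : Convex ℝ S) (h0 : (0 : E) ∈ S) (a : E)
    (B : E →ₗ[ℝ] E →ₗ[ℝ] ℝ) (hBsymm : ∀ x y, B x y = B y x)
    (hBnonneg : ∀ x, 0 ≤ B x x)
    (ψ : E → ℝ) (hψ : ConvexOn ℝ Set.univ ψ) (hψ0 : ψ 0 = 0)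
    (α β : ℝ) (hα : 0 < α) (hβ : 0 < β) (hαβ : 1 ≤ α * β) :
    sInf ((fun x => ⟪a, x⟫ + (α / 2) * B x x + ψ x) '' S) ≤
      (1 / (α * β)) * sInf ((fun x => ⟪a, x⟫ + ((1 / β) / 2) * B x x + ψ x) '' S) := by
  have hαβ0 : 0 < α * β := mul_pos hα hβ
  by_cases hbdd : BddBelow ((fun x => ⟪a, x⟫ + (α / 2) * B x x + ψ x) '' S)
  · have ht0 : 0 < 1 / (α * β) := by positivity
    have ht1 : 1 / (α * β) ≤ 1 := by
      rw [div_le_one hαβ0]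
      exact hαβ
    have hαt : α * (1 / (α * β)) = 1 / β := by field_simp
    generalize 1 / (α * β) = t at ht0 ht1 hαt ⊢
    rw [← div_le_iff₀' ht0]
    refine le_csInf (Set.Nonempty.image _ ⟨0, h0⟩) ?_
    rintro _ ⟨x, hx, rfl⟩
    rw [div_le_iff₀' ht0]
    have hmem : t • x ∈ S := hS.smul_mem_of_zero_mem h0 hx ⟨ht0.le, ht1⟩
    refine (csInf_le hbdd ⟨t • x, hmem, rfl⟩).trans ?_
    have hψt : ψ (t • x) ≤ t * ψ x := by
      have h := hψ.2 (Set.mem_univ x) (Set.mem_univ (0 : E)) ht0.le (sub_nonneg.2 ht1)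
        (add_sub_cancel t 1)
      simpa [hψ0] using h
    simp only [inner_smul_right, map_smul, LinearMap.smul_apply, smul_eq_mul]
    rw [← hαt]
    linarith
  · have hbdd' : ¬ BddBelow ((fun x => ⟪a, x⟫ + ((1 / β) / 2) * B x x + ψ x) '' S) := by
      rintro ⟨c, hc⟩
      refine hbdd ⟨c, ?_⟩
      rintro _ ⟨x, hx, rfl⟩
      refine (hc ⟨x, hx, rfl⟩).trans ?_
      have hle : 1 / β ≤ α := by
        rw [div_le_iff₀ hβ]
        exact hαβ
      have := mul_le_mul_of_nonneg_right hle (hBnonneg x)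
      dsimp only
      linarith
    rw [Real.sInf_of_not_bddBelow hbdd, Real.sInf_of_not_bddBelow hbdd', mul_zero]
end
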